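/- arXiv:0908.3013 — 3 statements merged into one kernel-verified Lean document; each statement's English description precedes it below -/
import Mathlib

section
/- Define on V^{⊗n} (n ≥ 2) the invertible operators T_i := c_i for 1 ≤ i ≤ n−1 and T_n := id_V^{⊗(n−1)} ⊗ J. Then T_1,…,T_n satisfy the defining relations of the braid group of type C∨C_n: T_iT_j = T_jT_i for |i−j| ≥ 2, T_iT_{i+1}T_i = T_{i+1}T_iT_{i+1} for 1 ≤ i ≤ n−2, and T_{n−1}T_nT_{n−1}T_n = T_nT_{n−1}T_nT_{n−1}; hence they define a representation of the braid group of type C∨C_n on V^{⊗n}. -/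
/-!
Each relation involves consecutive tensor factors only, and stays true after tensoring with an
identity on either side, because `f ↦ id ⊗ f` and `f ↦ f ⊗ id` are multiplicative. Tensoring on
the left reduces every relation to one whose leftmost operator acts on the first factor of
`V^{⊗n}`; there it is the given relation on `V^{⊗2}` or `V^{⊗3}` tensored on the right with the
remaining factors, or the commutation of `c ⊗ id` with `id_{V ⊗ V} ⊗ f`.
-/

open TensorProduct

/-- The iterated tensor power `V^{⊗n}` (with an extra harmless factor `K` at the end):
`TPow K V 0 = K` and `TPow K V (n+1) = V ⊗ TPow K V n`. -/
noncomputable def TPow (K : Type) [Field K] (V : Type) [AddCommGroup V] [Module K V] :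
    ℕ → ModuleCat K
  | 0 => ModuleCat.of K K
  | n + 1 => ModuleCat.of K (TensorProduct K V (TPow K V n))

variable {K : Type} [Field K] {V : Type} [AddCommGroup V] [Module K V]

/-- The operator `c_{i+1}`: an endomorphism `c` of `V ⊗ V` applied in the (0-based) tensor
factors `i, i+1` of `V^{⊗n}`, identity elsewhere (and identity if out of range). -/
noncomputable def opAt (c : Module.End K (TensorProduct K V V)) :
    (i n : ℕ) → Module.End K ↥(TPow K V n)
  | 0, n + 2 =>
      (show Module.End K (TensorProduct K V (TensorProduct K V ↥(TPow K V n))) from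
        (TensorProduct.assoc K V V ↥(TPow K V n)).conj
          (LinearMap.rTensor ↥(TPow K V n) c))
  | i + 1, n + 1 => LinearMap.lTensor V (opAt c i n)
  | _, _ => LinearMap.id

/-- The operator `id^{⊗(n−1)} ⊗ J`: an endomorphism `J` of `V` applied in the last tensor
factor of `V^{⊗n}`. -/
noncomputable def opLast (J : Module.End K V) : (n : ℕ) → Module.End K ↥(TPow K V n)
  | 0 => LinearMap.id
  | 1 => LinearMap.rTensor ↥(TPow K V 0) J
  | n + 2 => LinearMap.lTensor V (opLast J (n + 1))

/-- The operators `T_1, …, T_n` on `V^{⊗n}` (1-based `i`): `T_i := c_i` for `1 ≤ i ≤ n−1`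
and `T_n := id^{⊗(n−1)} ⊗ J`. -/
noncomputable def Tbr (c : Module.End K (TensorProduct K V V)) (J : Module.End K V)
    (n : ℕ) (i : ℕ) : Module.End K ↥(TPow K V n) :=
  if i = n then opLast J n else opAt c (i - 1) n

section Relations

variable {A B F : Type*} [Mul A] [Mul B] [FunLike F A B] [MulHomClass F A B] {a b : A}

/-- The braid relation of length three, the defining relation of an edge of order `3` in an Artin
group. -/
def BraidRel (a b : A) : Prop := a * b * a = b * a * b

/-- The braid relation of length four, the defining relation of an edge of order `4` in an Artin
group; for `a = c` and `b = id ⊗ J` it is the reflection equation. -/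
def FourBraidRel (a b : A) : Prop := a * b * a * b = b * a * b * a

theorem BraidRel.map (h : BraidRel a b) (φ : F) : BraidRel (φ a) (φ b) := by
  simpa only [BraidRel, map_mul] using congrArg φ h

theorem FourBraidRel.map (h : FourBraidRel a b) (φ : F) : FourBraidRel (φ a) (φ b) := by
  simpa only [FourBraidRel, map_mul] using congrArg φ h

end Relations

section TensorOnTheRight

variable {R M N P : Type*} (W : Type*) [CommSemiring R] [AddCommMonoid M] [Module R M]
  [AddCommMonoid N] [Module R N] [AddCommMonoid P] [Module R P] [AddCommMonoid W] [Module R W]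

theorem conj_rTensor_rTensor (e : M ≃ₗ[R] N) (f : Module.End R M) :
    (e.rTensor W).conj (f.rTensor W) = (e.conj f).rTensor W := by
  simp only [LinearEquiv.conj_apply, LinearMap.rTensor_comp, LinearEquiv.symm_rTensor,
    LinearEquiv.coe_rTensor]

theorem conj_lTensor_lTensor (e : M ≃ₗ[R] N) (f : Module.End R M) :
    (e.lTensor W).conj (f.lTensor W) = (e.conj f).lTensor W := by
  simp only [LinearEquiv.conj_apply, LinearMap.lTensor_comp, LinearEquiv.symm_lTensor,
    LinearEquiv.coe_lTensor]

/-- The algebra homomorphism `f ↦ f ⊗ id_W` on operators of `M ⊗ N`, with `(M ⊗ N) ⊗ W`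
rebracketed as `M ⊗ (N ⊗ W)`. -/
noncomputable def rTensorAssocHom :
    Module.End R (M ⊗[R] N) →ₐ[R] Module.End R (M ⊗[R] (N ⊗[R] W)) :=
  ((TensorProduct.assoc R M N W).conjAlgEquiv R).toAlgHom.comp
    (Module.End.rTensorAlgHom R (M ⊗[R] N) W)

/-- The algebra homomorphism `f ↦ f ⊗ id_W` on operators of `M ⊗ (N ⊗ P)`, with
`(M ⊗ (N ⊗ P)) ⊗ W` rebracketed as `M ⊗ (N ⊗ (P ⊗ W))`. -/
noncomputable def rTensorAssocThreeHom :
    Module.End R (M ⊗[R] (N ⊗[R] P)) →ₐ[R] Module.End R (M ⊗[R] (N ⊗[R] (P ⊗[R] W))) :=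
  (((TensorProduct.assoc R N P W).lTensor M).conjAlgEquiv R).toAlgHom.comp (rTensorAssocHom W)

theorem rTensorAssocHom_apply (f : Module.End R (M ⊗[R] N)) :
    rTensorAssocHom W f = (TensorProduct.assoc R M N W).conj (f.rTensor W) :=
  rfl

theorem rTensorAssocThreeHom_apply (f : Module.End R (M ⊗[R] (N ⊗[R] P))) :
    rTensorAssocThreeHom W f =
      ((TensorProduct.assoc R N P W).lTensor M).conj (rTensorAssocHom W f) :=
  rfl

theorem rTensorAssocHom_lTensor (f : Module.End R N) :
    rTensorAssocHom W (f.lTensor M) = (f.rTensor W).lTensor M := by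
  ext x y z
  simp [rTensorAssocHom_apply, LinearEquiv.conj_apply]

theorem rTensorAssocThreeHom_lTensor (f : Module.End R (N ⊗[R] P)) :
    rTensorAssocThreeHom W (f.lTensor M) = (rTensorAssocHom W f).lTensor M := by
  rw [rTensorAssocThreeHom_apply, rTensorAssocHom_lTensor, conj_lTensor_lTensor,
    rTensorAssocHom_apply]

theorem rTensorAssocThreeHom_rTensorAssocHom (f : Module.End R (M ⊗[R] N)) :
    rTensorAssocThreeHom W (rTensorAssocHom P f) = rTensorAssocHom (P ⊗[R] W) f := by
  have rTensor_rTensor_eq : (f.rTensor P).rTensor W =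
      (TensorProduct.assoc R (M ⊗[R] N) P W).symm.conj (f.rTensor (P ⊗[R] W)) := by
    rw [LinearEquiv.conj_apply, LinearMap.rTensor_tensor]
    ext
    simp
  -- The rebracketings on the two sides agree by the pentagon identity.
  simp only [rTensorAssocThreeHom_apply, rTensorAssocHom_apply, TensorProduct.assoc_tensor'',
    ← conj_rTensor_rTensor, rTensor_rTensor_eq, ← LinearEquiv.conj_trans, LinearEquiv.trans_apply]

theorem commute_rTensorAssocHom_lTensor_lTensor (f : Module.End R (M ⊗[R] N))
    (g : Module.End R W) : Commute (rTensorAssocHom W f) ((g.lTensor N).lTensor M) := by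
  have lTensor_lTensor_eq : (g.lTensor N).lTensor M =
      (TensorProduct.assoc R M N W).conjAlgEquiv R (g.lTensor (M ⊗[R] N)) := by
    ext x y z
    simp
  have rTensor_commute_lTensor : Commute (f.rTensor W) (g.lTensor (M ⊗[R] N)) :=
    (LinearMap.rTensor_comp_lTensor ..).trans (LinearMap.lTensor_comp_rTensor ..).symm
  rw [lTensor_lTensor_eq]
  exact rTensor_commute_lTensor.map ((TensorProduct.assoc R M N W).conjAlgEquiv R)

theorem BraidRel.rTensorAssocHom_tensor {c : Module.End R (M ⊗[R] M)}
    (h : BraidRel (rTensorAssocHom M c) (c.lTensor M)) :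
    BraidRel (rTensorAssocHom (M ⊗[R] W) c) ((rTensorAssocHom W c).lTensor M) := by
  simpa only [rTensorAssocThreeHom_rTensorAssocHom, rTensorAssocThreeHom_lTensor] using
    h.map (rTensorAssocThreeHom W)

theorem FourBraidRel.rTensorAssocHom_lTensor_rTensor {c : Module.End R (M ⊗[R] N)}
    {J : Module.End R N} (h : FourBraidRel c (J.lTensor M)) :
    FourBraidRel (rTensorAssocHom W c) ((J.rTensor W).lTensor M) := by
  simpa only [rTensorAssocHom_lTensor] using h.map (rTensorAssocHom W)

end TensorOnTheRight

section TensorPowers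

/-- The algebra homomorphism `f ↦ id_V ⊗ f` from operators of `V^{⊗n}` to operators of
`V^{⊗(n+1)}`. -/
noncomputable def TPow.lTensorHom (n : ℕ) :
    Module.End K (TPow K V n) →ₐ[K] Module.End K (TPow K V (n + 1)) :=
  Module.End.lTensorAlgHom K (TPow K V n) V

variable {c : Module.End K (V ⊗[K] V)} {J : Module.End K V} {i j n : ℕ}

theorem commute_opAt_opAt (hij : i + 2 ≤ j) (hin : i + 2 ≤ n) :
    Commute (opAt c i n) (opAt c j n) := by
  obtain ⟨j, rfl⟩ := Nat.exists_eq_add_of_le' hij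
  obtain ⟨n, rfl⟩ := Nat.exists_eq_add_of_le' hin
  clear hij hin
  induction i with
  | zero => exact commute_rTensorAssocHom_lTensor_lTensor _ c (opAt c j n)
  | succ i ih => exact ih.map (TPow.lTensorHom (n + (i + 2)))

theorem commute_opAt_opLast (hin : i + 3 ≤ n) : Commute (opAt c i n) (opLast J n) := by
  obtain ⟨n, rfl⟩ := Nat.exists_eq_add_of_le' hin
  clear hin
  induction i with
  | zero => exact commute_rTensorAssocHom_lTensor_lTensor _ c (opLast J (n + 1))
  | succ i ih => exact ih.map (TPow.lTensorHom (n + (i + 3)))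

theorem braidRel_opAt_opAt_succ (hc : BraidRel (rTensorAssocHom V c) (c.lTensor V))
    (hin : i + 3 ≤ n) : BraidRel (opAt c i n) (opAt c (i + 1) n) := by
  obtain ⟨n, rfl⟩ := Nat.exists_eq_add_of_le' hin
  clear hin
  induction i with
  | zero => exact hc.rTensorAssocHom_tensor (TPow K V n)
  | succ i ih => exact ih.map (TPow.lTensorHom (n + (i + 3)))

theorem fourBraidRel_opAt_opLast (h : FourBraidRel c (J.lTensor V)) (n : ℕ) :
    FourBraidRel (opAt c n (n + 2)) (opLast J (n + 2)) := by
  induction n with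
  | zero => exact h.rTensorAssocHom_lTensor_rTensor (TPow K V 0)
  | succ n ih => exact ih.map (TPow.lTensorHom (n + 2))

theorem Tbr_self : Tbr c J n n = opLast J n :=
  if_pos rfl

theorem Tbr_succ_of_lt (h : i + 1 < n) : Tbr c J n (i + 1) = opAt c i n :=
  if_neg h.ne

end TensorPowers

theorem braid_group_CCn_representation_general
    (c : Module.End K (V ⊗[K] V)) (J : Module.End K V)
    (hbraid :
      ((TensorProduct.assoc K V V V).conj (LinearMap.rTensor V c)) * (LinearMap.lTensor V c)
          * ((TensorProduct.assoc K V V V).conj (LinearMap.rTensor V c))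
        = (LinearMap.lTensor V c)
          * ((TensorProduct.assoc K V V V).conj (LinearMap.rTensor V c))
          * (LinearMap.lTensor V c))
    (hrefl : c * LinearMap.lTensor V J * c * LinearMap.lTensor V J
        = LinearMap.lTensor V J * c * LinearMap.lTensor V J * c)
    {n : ℕ} (hn : 2 ≤ n) :
    (∀ i j : ℕ, 1 ≤ i → i + 2 ≤ j → j ≤ n → Tbr c J n i * Tbr c J n j
        = Tbr c J n j * Tbr c J n i) ∧
    (∀ i : ℕ, 1 ≤ i → i + 2 ≤ n → Tbr c J n i * Tbr c J n (i + 1) * Tbr c J n i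
        = Tbr c J n (i + 1) * Tbr c J n i * Tbr c J n (i + 1)) ∧
    (Tbr c J n (n - 1) * Tbr c J n n * Tbr c J n (n - 1) * Tbr c J n n
        = Tbr c J n n * Tbr c J n (n - 1) * Tbr c J n n * Tbr c J n (n - 1)) := by
  refine ⟨fun i j hi hij hjn => ?_, fun i hi hin => ?_, ?_⟩
  · obtain ⟨i, rfl⟩ := Nat.exists_eq_add_of_le' hi
    obtain ⟨j, rfl⟩ := Nat.exists_eq_add_of_le' (show 1 ≤ j by omega)
    rw [Tbr_succ_of_lt (i := i) (by omega)]
    obtain rfl | hj := hjn.eq_or_lt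
    · rw [Tbr_self]
      exact commute_opAt_opLast (by omega)
    · rw [Tbr_succ_of_lt hj]
      exact commute_opAt_opAt (by omega) (by omega)
  · obtain ⟨i, rfl⟩ := Nat.exists_eq_add_of_le' hi
    rw [Tbr_succ_of_lt (i := i) (by omega), Tbr_succ_of_lt (by omega)]
    exact braidRel_opAt_opAt_succ hbraid (by omega)
  · obtain ⟨n, rfl⟩ := Nat.exists_eq_add_of_le' hn
    rw [Tbr_self, show n + 2 - 1 = n + 1 from rfl, Tbr_succ_of_lt (by omega)]
    exact fourBraidRel_opAt_opLast hrefl n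

/-- If `c` is an invertible solution of the braid relation on `V^{⊗3}` and `J`
is an invertible solution of the reflection equation `c(1⊗J)c(1⊗J) = (1⊗J)c(1⊗J)c` on `V⊗V`,
then `T_i := c_i` (`1 ≤ i ≤ n−1`) and `T_n := id^{⊗(n−1)} ⊗ J` satisfy the defining relations
of the braid group of type `C∨Cₙ`; hence they define a representation of this braid group
on `V^{⊗n}`. -/
theorem braid_group_CCn_representation
    (K : Type) [Field K] (V : Type) [AddCommGroup V] [Module K V]
    (c : Module.End K (TensorProduct K V V)) (hc : IsUnit c)
    (J : Module.End K V) (hJ : IsUnit J)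
    (hbraid :
      ((TensorProduct.assoc K V V V).conj (LinearMap.rTensor V c)) * (LinearMap.lTensor V c)
          * ((TensorProduct.assoc K V V V).conj (LinearMap.rTensor V c))
        = (LinearMap.lTensor V c)
          * ((TensorProduct.assoc K V V V).conj (LinearMap.rTensor V c))
          * (LinearMap.lTensor V c))
    (hrefl : c * LinearMap.lTensor V J * c * LinearMap.lTensor V J
        = LinearMap.lTensor V J * c * LinearMap.lTensor V J * c)
    (n : ℕ) (hn : 2 ≤ n) :
    (∀ i j : ℕ, 1 ≤ i → i + 2 ≤ j → j ≤ n → Tbr c J n i * Tbr c J n j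
        = Tbr c J n j * Tbr c J n i) ∧
    (∀ i : ℕ, 1 ≤ i → i + 2 ≤ n → Tbr c J n i * Tbr c J n (i + 1) * Tbr c J n i
        = Tbr c J n (i + 1) * Tbr c J n i * Tbr c J n (i + 1)) ∧
    (Tbr c J n (n - 1) * Tbr c J n n * Tbr c J n (n - 1) * Tbr c J n n
        = Tbr c J n n * Tbr c J n (n - 1) * Tbr c J n n * Tbr c J n (n - 1)) :=
  braid_group_CCn_representation_general c J hbraid hrefl hn
end

section
/- In the braid group of type C∨C_n, the elements T_{(i⋯j)} and P_i satisfy the following relations: (i) T_{(i⋯j)}T_{(k⋯l)} = T_{(k⋯l)}T_{(i⋯j)} whenever the integer intervals [i,j] and [k,l] (endpoints in either order) are disjoint; T_{(i⋯j)}T_{(k⋯l)} = T_{(k⋯l)}T_{(i+1⋯j+1)} whenever k > l, min(i,j) ≥ l and max(i,j) < k; and T_{(i⋯j)}T_{(k⋯l)} = T_{(k⋯l)}T_{(i−1⋯j−1)} whenever k < l, min(i,j) > k and max(i,j) ≤ l; (ii) T_iP_{i+1}T_i = P_i for 1 ≤ i ≤ n−1, and T_iP_j = P_jT_i for 1 ≤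 i ≤ n−1 and j ∉ {i, i+1}; (iii) P_iP_j = P_jP_i for all 1 ≤ i, j ≤ n. -/
/-- The element `T_{(i⋯j)}`: for `j > i > 0` it is `T_i T_{i+1} ⋯ T_{j−1}`, for `i > j > 0`
it is `T_{i−1} ⋯ T_{j+1} T_j`, and for `i = j` it is `1`. -/
def Tseg {G : Type*} [Monoid G] (t : ℕ → G) (i j : ℕ) : G :=
  if i ≤ j then ((List.range (j - i)).map fun k => t (i + k)).prod
  else ((List.range (i - j)).map fun k => t (i - 1 - k)).prod

/-- The element `P_i := T_i ⋯ T_{n−1} T_n T_{n−1} ⋯ T_i = T_{(i⋯n)} T_n T_{(n⋯i)}`. -/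
def Pel {G : Type*} [Monoid G] (t : ℕ → G) (n i : ℕ) : G :=
  Tseg t i n * t n * Tseg t n i

/-!
Reading words backwards, that is, passing to the opposite monoid, preserves the braid relations and
exchanges ascending with descending segments, so only ascending segments need to be studied.

* For (i), cut an ascending segment around the letters `T_m T_{m+1}`. By the braid relation the
  middle turns `T_m` into `T_{m+1}`, and the outer pieces commute with the letter being moved. Hence
  `T_{(k⋯l)} T_m = T_{m+1} T_{(k⋯l)}` whenever `k ≤ m` and `m + 2 ≤ l`, and the relation between
  segments follows letter by letter.
* For (ii), `P_i = T_i P_{i+1} T_i` is immediate. If `j > i + 1`, all letters of `P_j` commute with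
  `T_i`. If `j < i`, moving `T_i` to the left through the descending half of `P_j` turns it into
  `T_{i-1}`, which commutes with `T_n`, and the ascending half turns it back into `T_i`.
* For (iii), `P_i` also commutes with `T_n` for `i < n`: the case `i = n - 1` is the quartic
  relation, and descending induction uses `P_i = T_i P_{i+1} T_i`. Hence for `i < j` the element
  `P_i` commutes with all letters of `P_j`.
-/

open MulOpposite

section Segments

variable {G : Type*} [Monoid G]

lemma op_tseg (t : ℕ → G) (i j : ℕ) : op (Tseg t i j) = Tseg (fun m ↦ op (t m)) j i := by
  rcases lt_trichotomy i j with h | rfl | h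
  · rw [Tseg, Tseg, if_pos h.le, if_neg h.not_ge, op_list_prod]
    refine congrArg List.prod (List.ext_getElem (by simp) fun k hk _ ↦ ?_)
    simp only [List.length_reverse, List.length_map, List.length_range] at hk
    simp [show i + (j - i - 1 - k) = j - 1 - k by omega]
  · simp [Tseg]
  · rw [Tseg, Tseg, if_neg h.not_ge, if_pos h.le, op_list_prod]
    refine congrArg List.prod (List.ext_getElem (by simp) fun k hk _ ↦ ?_)
    simp only [List.length_reverse, List.length_map, List.length_range] at hk
    simp [show i - 1 - (i - j - 1 - k) = j + k by omega]

lemma tseg_self (t : ℕ → G) (i : ℕ) : Tseg t i i = 1 := by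
  simp [Tseg]

lemma tseg_succ_right (t : ℕ → G) {i j : ℕ} (hij : i ≤ j) :
    Tseg t i (j + 1) = Tseg t i j * t j := by
  simp [Tseg, hij, Nat.le_succ_of_le hij, Nat.sub_add_comm hij, List.range_succ]

lemma tseg_succ_left (t : ℕ → G) {i j : ℕ} (hji : j ≤ i) :
    Tseg t (i + 1) j = t i * Tseg t i j :=
  op_injective <| by simp only [op_mul, op_tseg, tseg_succ_right _ hji]

lemma tseg_self_succ (t : ℕ → G) (i : ℕ) : Tseg t i (i + 1) = t i := by
  rw [tseg_succ_right t le_rfl, tseg_self, one_mul]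

lemma tseg_succ_self (t : ℕ → G) (i : ℕ) : Tseg t (i + 1) i = t i := by
  rw [tseg_succ_left t le_rfl, tseg_self, mul_one]

lemma tseg_mul_tseg_of_le (t : ℕ → G) {i j k : ℕ} (hij : i ≤ j) (hjk : j ≤ k) :
    Tseg t i j * Tseg t j k = Tseg t i k := by
  induction k, hjk using Nat.le_induction with
  | base => rw [tseg_self, mul_one]
  | succ k hjk ih =>
    rw [tseg_succ_right t hjk, tseg_succ_right t (hij.trans hjk), ← mul_assoc, ih]

lemma tseg_mul_tseg_of_ge (t : ℕ → G) {i j k : ℕ} (hji : j ≤ i) (hkj : k ≤ j) :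
    Tseg t i j * Tseg t j k = Tseg t i k :=
  op_injective <| by simp only [op_mul, op_tseg, tseg_mul_tseg_of_le _ hkj hji]

lemma tseg_comp_succ (t : ℕ → G) (i j : ℕ) :
    Tseg (fun m ↦ t (m + 1)) i j = Tseg t (i + 1) (j + 1) := by
  rcases le_total i j with hij | hji
  · induction j, hij using Nat.le_induction with
    | base => simp only [tseg_self]
    | succ j hij ih => rw [tseg_succ_right _ hij, tseg_succ_right t (by omega), ih]
  · induction i, hji using Nat.le_induction with
    | base => simp only [tseg_self]
    | succ i hji ih => rw [tseg_succ_left _ hji, tseg_succ_left t (by omega), ih]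

lemma semiconjBy_tseg {s t : ℕ → G} {a : G} {i j : ℕ}
    (h : ∀ m, min i j ≤ m → m < max i j → SemiconjBy a (s m) (t m)) :
    SemiconjBy a (Tseg s i j) (Tseg t i j) := by
  rcases le_total i j with hij | hji
  · induction j, hij using Nat.le_induction with
    | base => simp [tseg_self]
    | succ j hij ih =>
      rw [tseg_succ_right _ hij, tseg_succ_right _ hij]
      exact (ih fun m _ _ ↦ h m (by omega) (by omega)).mul_right (h j (by omega) (by omega))
  · induction i, hji using Nat.le_induction with
    | base => simp [tseg_self]
    | succ i hji ih =>
      rw [tseg_succ_left _ hji, tseg_succ_left _ hji]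
      exact (h i (by omega) (by omega)).mul_right (ih fun m _ _ ↦ h m (by omega) (by omega))

lemma commute_tseg {t : ℕ → G} {a : G} {i j : ℕ}
    (h : ∀ m, min i j ≤ m → m < max i j → Commute a (t m)) : Commute a (Tseg t i j) :=
  semiconjBy_tseg h

lemma mul_pel_succ_mul (t : ℕ → G) {n i : ℕ} (hi : i < n) :
    t i * Pel t n (i + 1) * t i = Pel t n i := by
  rw [Pel, Pel, ← tseg_mul_tseg_of_le t i.le_succ hi, ← tseg_mul_tseg_of_ge t hi i.le_succ,
    tseg_self_succ, tseg_succ_self]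
  simp only [mul_assoc]

lemma commute_pel {t : ℕ → G} {a : G} {n i : ℕ} (hi : i ≤ n)
    (h : ∀ m, i ≤ m → m ≤ n → Commute a (t m)) : Commute a (Pel t n i) := by
  have hup : Commute a (Tseg t i n) := commute_tseg fun m _ _ ↦ h m (by omega) (by omega)
  have hdown : Commute a (Tseg t n i) := commute_tseg fun m _ _ ↦ h m (by omega) (by omega)
  exact (hup.mul_right (h n hi le_rfl)).mul_right hdown

end Segments

/-- The relations of the braid group of type `A_{n-1}` for the elements `t 1, …, t (n - 1)`.
These are exactly the letters of the segments `Tseg t i j` with `1 ≤ i, j ≤ n`. -/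
structure IsBraidTypeA {G : Type*} [Monoid G] (n : ℕ) (t : ℕ → G) : Prop where
  commute_of_add_two_le : ∀ i j, 1 ≤ i → i + 2 ≤ j → j < n → Commute (t i) (t j)
  braid : ∀ i, 1 ≤ i → i + 2 ≤ n → t i * t (i + 1) * t i = t (i + 1) * t i * t (i + 1)

/-- The relations of the braid group of type `C∨C_n` for the elements `t 1, …, t n`. The quartic
relation is indexed by `i = n - 1`, with the index equation as a hypothesis, so that it is void
for `n ≤ 1`. -/
structure IsBraidTypeC {G : Type*} [Monoid G] (n : ℕ) (t : ℕ → G) : Prop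
    extends IsBraidTypeA n t where
  commute_last : ∀ i, 1 ≤ i → i + 2 ≤ n → Commute (t i) (t n)
  quartic : ∀ i, 1 ≤ i → i + 1 = n → t i * t n * t i * t n = t n * t i * t n * t i

namespace IsBraidTypeA

variable {G : Type*} [Monoid G] {n : ℕ} {t : ℕ → G} {i j k l m : ℕ}

protected lemma op (h : IsBraidTypeA n t) : IsBraidTypeA n fun m ↦ op (t m) where
  commute_of_add_two_le i j hi hij hj := (h.commute_of_add_two_le i j hi hij hj).op
  braid i hi hin := unop_injective <| by simpa [mul_assoc] using h.braid i hi hin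

lemma commute_tseg_of_far (h : IsBraidTypeA n t) (hm : 1 ≤ m) (hmn : m < n)
    (hi : 1 ≤ i) (hin : i ≤ n) (hj : 1 ≤ j) (hjn : j ≤ n)
    (hfar : m + 1 < min i j ∨ max i j < m) : Commute (t m) (Tseg t i j) :=
  commute_tseg fun p _ _ ↦ hfar.elim
    (fun _ ↦ h.commute_of_add_two_le m p hm (by omega) (by omega))
    (fun _ ↦ (h.commute_of_add_two_le p m (by omega) (by omega) hmn).symm)

lemma commute_tseg_tseg (h : IsBraidTypeA n t) (hi : 1 ≤ i) (hin : i ≤ n) (hj : 1 ≤ j)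
    (hjn : j ≤ n) (hk : 1 ≤ k) (hkn : k ≤ n) (hl : 1 ≤ l) (hln : l ≤ n)
    (hdisj : max i j < min k l ∨ max k l < min i j) :
    Commute (Tseg t i j) (Tseg t k l) :=
  commute_tseg fun _ _ _ ↦ Commute.symm <|
    h.commute_tseg_of_far (by omega) (by omega) hi hin hj hjn (by omega)

lemma semiconjBy_tseg_succ (h : IsBraidTypeA n t) (hk : 1 ≤ k) (hln : l ≤ n)
    (hkm : k ≤ m) (hml : m + 2 ≤ l) : SemiconjBy (Tseg t k l) (t m) (t (m + 1)) := by
  have hsplit : Tseg t k m * (t m * t (m + 1)) * Tseg t (m + 2) l = Tseg t k l := by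
    rw [← mul_assoc, ← tseg_succ_right t hkm, ← tseg_succ_right t (by omega),
      tseg_mul_tseg_of_le t (by omega) hml]
  have hleft : Commute (Tseg t k m) (t (m + 1)) :=
    (h.commute_tseg_of_far (by omega) (by omega) hk (by omega) (by omega) (by omega)
      (by omega)).symm
  have hmiddle : SemiconjBy (t m * t (m + 1)) (t m) (t (m + 1)) := by
    rw [SemiconjBy, h.braid m (by omega) (by omega), mul_assoc]
  have hright : Commute (Tseg t (m + 2) l) (t m) :=
    (h.commute_tseg_of_far (by omega) (by omega) (by omega) (by omega) (by omega) hln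
      (by omega)).symm
  rw [← hsplit]
  exact (SemiconjBy.mul_left hleft hmiddle).mul_left hright

lemma semiconjBy_tseg_pred (h : IsBraidTypeA n t) (hl : 1 ≤ l) (hkn : k ≤ n)
    (hlm : l ≤ m) (hmk : m + 2 ≤ k) : SemiconjBy (Tseg t k l) (t (m + 1)) (t m) :=
  semiconjBy_op.1 <| op_tseg t k l ▸ h.op.semiconjBy_tseg_succ hl hkn hlm hmk

lemma semiconjBy_tseg_tseg_succ (h : IsBraidTypeA n t) (hk : 1 ≤ k) (hln : l ≤ n)
    (hmin : k ≤ min i j) (hmax : max i j < l) :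
    SemiconjBy (Tseg t k l) (Tseg t i j) (Tseg t (i + 1) (j + 1)) :=
  tseg_comp_succ t i j ▸ semiconjBy_tseg fun _ _ _ ↦
    h.semiconjBy_tseg_succ hk hln (by omega) (by omega)

lemma semiconjBy_tseg_tseg_pred (h : IsBraidTypeA n t) (hl : 1 ≤ l) (hkn : k ≤ n)
    (hmin : l ≤ min i j) (hmax : max i j < k) :
    SemiconjBy (Tseg t k l) (Tseg t (i + 1) (j + 1)) (Tseg t i j) :=
  tseg_comp_succ t i j ▸ semiconjBy_tseg fun _ _ _ ↦
    h.semiconjBy_tseg_pred hl hkn (by omega) (by omega)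

end IsBraidTypeA

namespace IsBraidTypeC

variable {G : Type*} [Monoid G] {n : ℕ} {t : ℕ → G} {i j : ℕ}

lemma commute_pel_of_add_one_lt (h : IsBraidTypeC n t) (hi : 1 ≤ i) (hij : i + 1 < j)
    (hjn : j ≤ n) : Commute (t i) (Pel t n j) :=
  commute_pel hjn fun m _ hmn ↦ hmn.eq_or_lt.elim
    (fun hm ↦ hm ▸ h.commute_last i hi (by omega))
    (fun hm ↦ h.commute_of_add_two_le i m hi (by omega) hm)

lemma commute_succ_pel_of_le (h : IsBraidTypeC n t) (hj : 1 ≤ j) (hji : j ≤ i)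
    (hin : i + 2 ≤ n) : Commute (t (i + 1)) (Pel t n j) := by
  have hup : SemiconjBy (Tseg t j n) (t i) (t (i + 1)) :=
    h.semiconjBy_tseg_succ hj le_rfl hji hin
  have hlast : Commute (t n) (t i) := (h.commute_last i (hj.trans hji) hin).symm
  have hdown : SemiconjBy (Tseg t n j) (t (i + 1)) (t i) :=
    h.semiconjBy_tseg_pred hj le_rfl hji hin
  exact Commute.symm ((hup.mul_left hlast).mul_left hdown)

lemma commute_pel_of_ne (h : IsBraidTypeC n t) (hi : 1 ≤ i) (hin : i < n) (hj : 1 ≤ j)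
    (hjn : j ≤ n) (hne : j ≠ i) (hne_succ : j ≠ i + 1) : Commute (t i) (Pel t n j) := by
  rcases hne.lt_or_gt with hji | hij
  · obtain ⟨m, rfl⟩ := Nat.exists_eq_add_of_le' hi
    exact h.commute_succ_pel_of_le hj (by omega) hin
  · exact h.commute_pel_of_add_one_lt hi (by omega) hjn

lemma commute_last_pel (h : IsBraidTypeC n t) (hi : 1 ≤ i) (hin : i < n) :
    Commute (t n) (Pel t n i) := by
  induction Nat.le_sub_one_of_lt hin using Nat.decreasingInduction with
  | self =>
    have hn : n - 1 + 1 = n := by omega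
    rw [← mul_pel_succ_mul t hin, hn, Pel, tseg_self, one_mul, mul_one]
    simpa only [Commute, SemiconjBy, mul_assoc] using (h.quartic (n - 1) hi hn).symm
  | of_succ i _ ih =>
    have hcomm : Commute (t n) (t i) := (h.commute_last i hi (by omega)).symm
    rw [← mul_pel_succ_mul t hin]
    exact (hcomm.mul_right (ih (by omega) (by omega))).mul_right hcomm

lemma commute_pel_pel_of_lt (h : IsBraidTypeC n t) (hi : 1 ≤ i) (hij : i < j) (hjn : j ≤ n) :
    Commute (Pel t n i) (Pel t n j) := by
  refine commute_pel hjn fun m hjm hmn ↦ Commute.symm ?_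
  rcases hmn.eq_or_lt with rfl | hmn
  · exact h.commute_last_pel hi (by omega)
  · exact h.commute_pel_of_ne (by omega) hmn hi (by omega) (by omega) (by omega)

lemma commute_pel_pel (h : IsBraidTypeC n t) (hi : 1 ≤ i) (hin : i ≤ n) (hj : 1 ≤ j)
    (hjn : j ≤ n) : Commute (Pel t n i) (Pel t n j) := by
  rcases lt_trichotomy i j with hij | rfl | hji
  · exact h.commute_pel_pel_of_lt hi hij hjn
  · exact Commute.refl _
  · exact (h.commute_pel_pel_of_lt hj hji hin).symm

end IsBraidTypeC

theorem Tseg_Pel_relations_general {G : Type*} [Monoid G] {n : ℕ} {t : ℕ → G}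
    (h : IsBraidTypeC n t) :
    (∀ i j k l : ℕ, 1 ≤ i → i ≤ n → 1 ≤ j → j ≤ n → 1 ≤ k → k ≤ n → 1 ≤ l → l ≤ n →
        (max i j < min k l ∨ max k l < min i j) →
        Tseg t i j * Tseg t k l = Tseg t k l * Tseg t i j) ∧
    (∀ i j k l : ℕ, 1 ≤ i → i ≤ n → 1 ≤ j → j ≤ n → 1 ≤ k → k ≤ n → 1 ≤ l → l ≤ n →
        l < k → l ≤ min i j → max i j < k →
        Tseg t i j * Tseg t k l = Tseg t k l * Tseg t (i + 1) (j + 1)) ∧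
    (∀ i j k l : ℕ, 1 ≤ i → i ≤ n → 1 ≤ j → j ≤ n → 1 ≤ k → k ≤ n → 1 ≤ l → l ≤ n →
        k < l → k < min i j → max i j ≤ l →
        Tseg t i j * Tseg t k l = Tseg t k l * Tseg t (i - 1) (j - 1)) ∧
    (∀ i : ℕ, 1 ≤ i → i ≤ n - 1 → t i * Pel t n (i + 1) * t i = Pel t n i) ∧
    (∀ i j : ℕ, 1 ≤ i → i ≤ n - 1 → 1 ≤ j → j ≤ n → j ≠ i → j ≠ i + 1 →
        t i * Pel t n j = Pel t n j * t i) ∧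
    (∀ i j : ℕ, 1 ≤ i → i ≤ n → 1 ≤ j → j ≤ n →
        Pel t n i * Pel t n j = Pel t n j * Pel t n i) := by
  refine ⟨?_, ?_, ?_, ?_, ?_, ?_⟩
  · intro i j k l hi hin hj hjn hk hkn hl hln hdisj
    exact h.commute_tseg_tseg hi hin hj hjn hk hkn hl hln hdisj
  · intro i j k l _ _ _ _ _ hkn hl _ _ hmin hmax
    exact (h.semiconjBy_tseg_tseg_pred hl hkn hmin hmax).eq.symm
  · intro i j k l hi _ hj _ hk _ _ hln _ hmin hmax
    obtain ⟨i, rfl⟩ := Nat.exists_eq_add_of_le' hi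
    obtain ⟨j, rfl⟩ := Nat.exists_eq_add_of_le' hj
    exact (h.semiconjBy_tseg_tseg_succ hk hln (by omega) (by omega)).eq.symm
  · intro i _ hin
    exact mul_pel_succ_mul t (by omega)
  · intro i j hi hin hj hjn hne hne_succ
    exact h.commute_pel_of_ne hi (by omega) hj hjn hne hne_succ
  · intro i j hi hin hj hjn
    exact h.commute_pel_pel hi hin hj hjn

/-- In the braid group of type `C∨Cₙ` — i.e. for any group `G` and elements
`T_1, …, T_n` satisfying its defining relations — the elements `T_{(i⋯j)}` and `P_i` satisfy:
(i) the interval commutation/shift relations, (ii) `T_iP_{i+1}T_i = P_i` and `T_iP_j = P_jT_i`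
for `j ∉ {i, i+1}`, and (iii) `P_iP_j = P_jP_i`. -/
theorem Tseg_Pel_relations {G : Type*} [Group G] (n : ℕ) (hn : 2 ≤ n) (t : ℕ → G)
    (hcomm : ∀ i j : ℕ, 1 ≤ i → i + 2 ≤ j → j ≤ n → t i * t j = t j * t i)
    (hbraid : ∀ i : ℕ, 1 ≤ i → i + 2 ≤ n →
      t i * t (i + 1) * t i = t (i + 1) * t i * t (i + 1))
    (hquartic : t (n - 1) * t n * t (n - 1) * t n = t n * t (n - 1) * t n * t (n - 1)) :
    -- (i) disjoint intervals commute
    (∀ i j k l : ℕ, 1 ≤ i → i ≤ n → 1 ≤ j → j ≤ n → 1 ≤ k → k ≤ n → 1 ≤ l → l ≤ n →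
        (max i j < min k l ∨ max k l < min i j) →
        Tseg t i j * Tseg t k l = Tseg t k l * Tseg t i j) ∧
    -- (i) shift up: k > l, min(i,j) ≥ l, max(i,j) < k
    (∀ i j k l : ℕ, 1 ≤ i → i ≤ n → 1 ≤ j → j ≤ n → 1 ≤ k → k ≤ n → 1 ≤ l → l ≤ n →
        l < k → l ≤ min i j → max i j < k →
        Tseg t i j * Tseg t k l = Tseg t k l * Tseg t (i + 1) (j + 1)) ∧
    -- (i) shift down: k < l, min(i,j) > k, max(i,j) ≤ l
    (∀ i j k l : ℕ, 1 ≤ i → i ≤ n → 1 ≤ j → j ≤ n → 1 ≤ k → k ≤ n → 1 ≤ l → l ≤ n →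
        k < l → k < min i j → max i j ≤ l →
        Tseg t i j * Tseg t k l = Tseg t k l * Tseg t (i - 1) (j - 1)) ∧
    -- (ii)
    (∀ i : ℕ, 1 ≤ i → i ≤ n - 1 → t i * Pel t n (i + 1) * t i = Pel t n i) ∧
    (∀ i j : ℕ, 1 ≤ i → i ≤ n - 1 → 1 ≤ j → j ≤ n → j ≠ i → j ≠ i + 1 →
        t i * Pel t n j = Pel t n j * t i) ∧
    -- (iii)
    (∀ i j : ℕ, 1 ≤ i → i ≤ n → 1 ≤ j → j ≤ n →
        Pel t n i * Pel t n j = Pel t n j * Pel t n i) :=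
  Tseg_Pel_relations_general
    ⟨⟨fun i j hi hij hj ↦ hcomm i j hi hij hj.le, hbraid⟩,
      fun i hi hin ↦ hcomm i n hi hin le_rfl, fun i _ hin ↦ by subst hin; exact hquartic⟩
end

section
/- In the double affine braid group B̃_n of type C∨C_n, define Y_i := P_i T_{(i⋯1)} T_0 T_{(i⋯1)}⁻¹ and X_i := P_i⁻¹ T_{(1⋯i)}⁻¹ K_0⁻¹ T_{(1⋯i)} for 1 ≤ i ≤ n. Then: the elements Y_1,…,Y_n pairwise commute; the elements X_1,…,X_n pairwise commute; T_iY_{i+1}T_i = Y_i and T_iX_iT_i = X_{i+1} for 1 ≤ i ≤ n−1; T_iY_j = Y_jT_i and T_iX_j = X_jT_i for 1 ≤ i ≤ n−1 and j ∉ {i, i+1}; T_nY_{n−1} = Y_{n−1}T_n and T_nX_{n−1} = X_{n−1}T_n; and X_i commutes with P_1⁻¹Y_1 for 2 ≤ i ≤ n−1. -/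
/-- `Y_i := P_i T_{(i⋯1)} T_0 T_{(i⋯1)}⁻¹`. -/
def Yel {G : Type*} [Group G] (t : ℕ → G) (n i : ℕ) : G :=
  Pel t n i * Tseg t i 1 * t 0 * (Tseg t i 1)⁻¹

/-- `X_i := P_i⁻¹ T_{(1⋯i)}⁻¹ K_0⁻¹ T_{(1⋯i)}`. -/
def Xel {G : Type*} [Group G] (t : ℕ → G) (K0 : G) (n i : ℕ) : G :=
  (Pel t n i)⁻¹ * (Tseg t 1 i)⁻¹ * K0⁻¹ * Tseg t 1 i

/-!
Write `Y_i = P_i S_i` with `S_i = T_{(i⋯1)} T_0 T_{(i⋯1)}⁻¹`. The recursions `P_i = T_i P_{i+1} T_i`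
and `S_{i+1} = T_i S_i T_i⁻¹` give `T_i Y_{i+1} T_i = Y_i`, and for `j ∉ {i, i + 1}` the braid
relations show that `T_i` commutes with `P_j` and with `S_j`, hence with `Y_j`. A computation with
`T_0`, `T_1` and `P_2` gives `Y_1 Y_2 = Y_2 Y_1`. Since `Y_{i+1} = T_i⁻¹ Y_i T_i⁻¹`, the other pairs
follow by raising first the larger and then the smaller index.

None of this involves `K_0`. The relations are symmetric under the anti-involution that exchanges
`T_0` and `K_0`: in the opposite group `K_0, T_1, …, T_n` satisfy the relations of
`T_0, T_1, …, T_n`, and their `Y_i` are the inverses of the `X_i`, so the statements about the `X_i`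
are those about the `Y_i` read in the opposite group. Finally `P_1⁻¹ Y_1 = T_0`, and its commutation
with `X_i` comes down to the mixed relation between `T_0` and `T_1⁻¹ K_0 T_1`.
-/

open MulOpposite

section Monoid

variable {M : Type*} [Monoid M] (t : ℕ → M)

lemma Tseg_self (i : ℕ) : Tseg t i i = 1 := by simp [Tseg]

lemma Tseg_of_le {i j : ℕ} (h : i ≤ j) :
    Tseg t i j = ((List.range (j - i)).map fun k => t (i + k)).prod :=
  if_pos h

lemma Tseg_of_ge {i j : ℕ} (h : j ≤ i) :
    Tseg t i j = ((List.range (i - j)).map fun k => t (i - 1 - k)).prod := by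
  obtain rfl | h := h.eq_or_lt
  · simp [Tseg]
  · exact if_neg h.not_ge

lemma Tseg_succ_right {i j : ℕ} (h : i ≤ j) : Tseg t i (j + 1) = Tseg t i j * t j := by
  rw [Tseg_of_le t h, Tseg_of_le t (by omega), Nat.succ_sub h, List.prod_range_succ,
    Nat.add_sub_cancel' h]

lemma Tseg_succ_left {i j : ℕ} (h : j ≤ i) : Tseg t (i + 1) j = t i * Tseg t i j := by
  rw [Tseg_of_ge t h, Tseg_of_ge t (by omega), Nat.succ_sub h, List.prod_range_succ']
  simp [Nat.sub_sub, Nat.add_comm 1]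

lemma mul_Tseg_succ_left {i j : ℕ} (h : i < j) : t i * Tseg t (i + 1) j = Tseg t i j := by
  induction j, Nat.succ_le_of_lt h using Nat.le_induction with
  | base => rw [Tseg_succ_right t le_rfl, Tseg_self, Tseg_self, mul_one, one_mul]
  | succ j hj ih => rw [Tseg_succ_right t hj, Tseg_succ_right t (by omega), ← mul_assoc, ih hj]

lemma Tseg_succ_right_mul {i j : ℕ} (h : j < i) : Tseg t i (j + 1) * t j = Tseg t i j := by
  induction i, Nat.succ_le_of_lt h using Nat.le_induction with
  | base => rw [Tseg_succ_left t le_rfl, Tseg_self, Tseg_self, mul_one, one_mul]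
  | succ i hi ih => rw [Tseg_succ_left t hi, Tseg_succ_left t (by omega), mul_assoc, ih hi]

lemma Pel_self (n : ℕ) : Pel t n n = t n := by simp [Pel, Tseg_self]

lemma mul_Pel_succ_mul {i n : ℕ} (h : i < n) : t i * Pel t n (i + 1) * t i = Pel t n i := by
  simp only [Pel, ← mul_Tseg_succ_left t h, ← Tseg_succ_right_mul t h, mul_assoc]

variable {t}

lemma commute_Tseg {x : M} {i j : ℕ} (h : ∀ k, min i j ≤ k → k < max i j → Commute x (t k)) :
    Commute x (Tseg t i j) := by
  rcases le_total i j with hij | hij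
  · rw [Tseg_of_le t hij]
    refine Commute.list_prod_right _ _ fun y hy => ?_
    obtain ⟨k, hk, rfl⟩ := List.mem_map.1 hy
    rw [List.mem_range] at hk
    exact h _ (by omega) (by omega)
  · rw [Tseg_of_ge t hij]
    refine Commute.list_prod_right _ _ fun y hy => ?_
    obtain ⟨k, hk, rfl⟩ := List.mem_map.1 hy
    rw [List.mem_range] at hk
    exact h _ (by omega) (by omega)

lemma commute_Pel {x : M} {n j : ℕ} (hj : j ≤ n) (h : ∀ k, j ≤ k → k ≤ n → Commute x (t k)) :
    Commute x (Pel t n j) :=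
  ((commute_Tseg fun k _ _ => h k (by omega) (by omega)).mul_right (h n hj le_rfl)).mul_right
    (commute_Tseg fun k _ _ => h k (by omega) (by omega))

end Monoid

section Group

variable {G : Type*} [Group G] (t : ℕ → G)

/-- `S_i := T_{(i⋯1)} T_0 T_{(i⋯1)}⁻¹`, the second factor of `Y_i = P_i S_i`. -/
def Sel (i : ℕ) : G := Tseg t i 1 * t 0 * (Tseg t i 1)⁻¹

lemma Sel_one : Sel t 1 = t 0 := by simp [Sel, Tseg_self]

lemma Sel_succ {i : ℕ} (hi : 1 ≤ i) : Sel t (i + 1) = t i * Sel t i * (t i)⁻¹ := by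
  rw [Sel, Sel, Tseg_succ_left t hi]
  group

lemma Yel_eq_Pel_mul_Sel (n i : ℕ) : Yel t n i = Pel t n i * Sel t i := by
  simp only [Yel, Sel, mul_assoc]

lemma Yel_one (n : ℕ) : Yel t n 1 = Pel t n 1 * t 0 := by
  rw [Yel_eq_Pel_mul_Sel, Sel_one]

lemma mul_Yel_succ_mul {i n : ℕ} (hi : 1 ≤ i) (hin : i < n) :
    t i * Yel t n (i + 1) * t i = Yel t n i := by
  rw [Yel_eq_Pel_mul_Sel, Yel_eq_Pel_mul_Sel, Sel_succ t hi, ← mul_Pel_succ_mul t hin]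
  group

lemma Yel_succ {i n : ℕ} (hi : 1 ≤ i) (hin : i < n) :
    Yel t n (i + 1) = (t i)⁻¹ * Yel t n i * (t i)⁻¹ := by
  rw [← mul_Yel_succ_mul t hi hin]
  group

lemma Xel_one (K0 : G) (n : ℕ) : Xel t K0 n 1 = (Pel t n 1)⁻¹ * K0⁻¹ := by
  simp [Xel, Tseg_self]

lemma mul_Xel_mul (K0 : G) {i n : ℕ} (hi : 1 ≤ i) (hin : i < n) :
    t i * Xel t K0 n i * t i = Xel t K0 n (i + 1) := by
  rw [Xel, Xel, Tseg_succ_right t hi, ← mul_Pel_succ_mul t hin]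
  group

variable {t}

lemma commute_Sel {x : G} {j : ℕ} (hj : 1 ≤ j) (h : ∀ k < j, Commute x (t k)) :
    Commute x (Sel t j) := by
  have hT : Commute x (Tseg t j 1) := commute_Tseg fun k _ _ => h k (by omega)
  exact (hT.mul_right (h 0 hj)).mul_right hT.inv_right

/-- The computation behind `Y_1 Y_2 = Y_2 Y_1`, with `a = T_1`, `b = T_0` and `p = P_2`. -/
lemma commute_sandwich_mul_conj {a b p : G} (hbp : Commute b p)
    (hab : b * a * b * a = a * b * a * b) (hap : Commute (a * p * a) p) :
    Commute (a * p * a * b) (p * (a * b * a⁻¹)) := by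
  have hab' : b * a * b * a⁻¹ = a⁻¹ * b * a * b := by
    rw [mul_inv_eq_iff_eq_mul]
    simpa only [mul_assoc, eq_inv_mul_iff_mul_eq] using hab.symm
  calc a * p * a * b * (p * (a * b * a⁻¹))
      = a * p * a * (b * p) * (a * b * a⁻¹) := by group
    _ = (a * p * a * p) * (b * a * b * a⁻¹) := by rw [hbp.eq]; group
    _ = p * (a * p * a) * (a⁻¹ * b * a * b) := by rw [hap.eq, hab']
    _ = p * a * (p * b) * a * b := by group
    _ = p * (a * b * a⁻¹) * (a * p * a * b) := by rw [← hbp.eq]; group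

end Group

/-- The elements `t 1, …, t n` satisfy the relations of the braid group (Artin group) of type `B_n`,
the double bond joining `n - 1` and `n`. -/
structure TypeBBraidRelations {M : Type*} [Monoid M] (t : ℕ → M) (n : ℕ) : Prop where
  commute {i j : ℕ} : 1 ≤ i → i + 2 ≤ j → j ≤ n → Commute (t i) (t j)
  braid {i : ℕ} : 1 ≤ i → i + 2 ≤ n → t i * t (i + 1) * t i = t (i + 1) * t i * t (i + 1)
  quartic_last {i : ℕ} : 1 ≤ i → i + 1 = n → t i * t n * t i * t n = t n * t i * t n * t i

namespace TypeBBraidRelations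

variable {M : Type*} [Monoid M] {t : ℕ → M} {n : ℕ}

lemma semiconjBy_mul_succ (H : TypeBBraidRelations t n) {i : ℕ} (hi : 1 ≤ i) (hin : i + 2 ≤ n) :
    SemiconjBy (t i * t (i + 1)) (t i) (t (i + 1)) :=
  (H.braid hi hin).trans (mul_assoc _ _ _)

lemma semiconjBy_succ_mul (H : TypeBBraidRelations t n) {i : ℕ} (hi : 1 ≤ i) (hin : i + 2 ≤ n) :
    SemiconjBy (t (i + 1) * t i) (t (i + 1)) (t i) :=
  (H.braid hi hin).symm.trans (mul_assoc _ _ _)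

lemma commute_Pel_of_add_two_le (H : TypeBBraidRelations t n) {i j : ℕ} (hi : 1 ≤ i)
    (hij : i + 2 ≤ j) (hj : j ≤ n) : Commute (t i) (Pel t n j) :=
  commute_Pel hj fun _ hjk hk => H.commute hi (hij.trans hjk) hk

/-- Below the double bond, `P_i = T_i T_{i+1} P_{i+2} T_{i+1} T_i`, and moving `T_{i+1}` through
these factors from right to left turns it into `T_i`, past `P_{i+2}`, and back into `T_{i+1}`. -/
lemma commute_succ_Pel (H : TypeBBraidRelations t n) {i : ℕ} (hi : 1 ≤ i) (hin : i < n) :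
    Commute (t (i + 1)) (Pel t n i) := by
  obtain rfl | h : i + 1 = n ∨ i + 2 ≤ n := by omega
  · rw [← mul_Pel_succ_mul t hin, Pel_self]
    simpa only [Commute, SemiconjBy, mul_assoc] using (H.quartic_last hi rfl).symm
  · have hP : Pel t n i = t i * t (i + 1) * (Pel t n (i + 2) * (t (i + 1) * t i)) := by
      simp only [← mul_Pel_succ_mul t hin, ← mul_Pel_succ_mul t h, mul_assoc]
    have hc : Commute (Pel t n (i + 2)) (t i) := (H.commute_Pel_of_add_two_le hi le_rfl h).symm
    have hs : SemiconjBy (Pel t n (i + 2) * (t (i + 1) * t i)) (t (i + 1)) (t i) :=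
      SemiconjBy.mul_left hc (H.semiconjBy_succ_mul hi h)
    rw [hP]
    exact Commute.symm ((H.semiconjBy_mul_succ hi h).mul_left hs)

lemma commute_Pel_of_lt (H : TypeBBraidRelations t n) {i j : ℕ} (hj : 1 ≤ j) (hji : j < i)
    (hi : i ≤ n) : Commute (t i) (Pel t n j) := by
  obtain ⟨i, rfl⟩ := Nat.exists_eq_succ_of_ne_zero (Nat.ne_zero_of_lt hji)
  induction Nat.le_of_lt_succ hji using Nat.decreasingInduction with
  | self => exact H.commute_succ_Pel hj hi
  | of_succ k hk ih =>
    have hc : Commute (t (i + 1)) (t k) := (H.commute hj (by omega) hi).symm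
    rw [← mul_Pel_succ_mul t (by omega)]
    exact (hc.mul_right (ih (by omega) (by omega))).mul_right hc

lemma commute_Pel_Pel_of_lt (H : TypeBBraidRelations t n) {i j : ℕ} (hi : 1 ≤ i) (hij : i < j)
    (hj : j ≤ n) : Commute (Pel t n i) (Pel t n j) :=
  commute_Pel hj fun _ hjk hk => (H.commute_Pel_of_lt hi (hij.trans_le hjk) hk).symm

end TypeBBraidRelations

/-- The elements `t 0, …, t n` satisfy the relations of the affine braid group of type `C_n`. -/
structure AffineCBraidRelations {M : Type*} [Monoid M] (t : ℕ → M) (n : ℕ) : Prop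
    extends TypeBBraidRelations t n where
  commute_zero {j : ℕ} : 2 ≤ j → j ≤ n → Commute (t 0) (t j)
  quartic_zero : t 0 * t 1 * t 0 * t 1 = t 1 * t 0 * t 1 * t 0

namespace AffineCBraidRelations

lemma commute_zero_Pel {M : Type*} [Monoid M] {t : ℕ → M} {n j : ℕ}
    (H : AffineCBraidRelations t n) (hj : 2 ≤ j) (hjn : j ≤ n) : Commute (t 0) (Pel t n j) :=
  commute_Pel hjn fun _ hjk hk => H.commute_zero (hj.trans hjk) hk

variable {G : Type*} [Group G] {t : ℕ → G} {n : ℕ}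

lemma commute_Sel_of_lt (H : AffineCBraidRelations t n) {i j : ℕ} (hj : 1 ≤ j) (hji : j < i)
    (hi : i ≤ n) : Commute (t i) (Sel t j) := by
  refine commute_Sel hj fun k hk => ?_
  obtain rfl | hk0 := k.eq_zero_or_pos
  · exact (H.commute_zero (by omega) hi).symm
  · exact (H.commute hk0 (by omega) hi).symm

lemma commute_Sel_of_add_two_le (H : AffineCBraidRelations t n) {i j : ℕ} (hi : 1 ≤ i)
    (hij : i + 2 ≤ j) (hj : j ≤ n) : Commute (t i) (Sel t j) := by
  induction j, hij using Nat.le_induction with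
  | base =>
    have hS : Sel t (i + 2) = t (i + 1) * t i * Sel t i * (t (i + 1) * t i)⁻¹ := by
      rw [Sel_succ t (by omega), Sel_succ t hi]
      group
    have hT : t (i + 1) * t i * t (i + 1) * (t (i + 1) * t i)⁻¹ = t i :=
      mul_inv_eq_of_eq_mul (H.semiconjBy_succ_mul hi hj)
    have hc := (Commute.conj_iff (t (i + 1) * t i)).2
      (H.commute_Sel_of_lt hi (Nat.lt_succ_self i) (Nat.le_of_succ_le hj))
    rwa [hT, ← hS] at hc
  | succ k hk ih =>
    have hc : Commute (t i) (t k) := H.commute hi hk (by omega)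
    rw [Sel_succ t (by omega)]
    exact (hc.mul_right (ih (by omega))).mul_right hc.inv_right

lemma commute_Yel (H : AffineCBraidRelations t n) {i j : ℕ} (hi : 1 ≤ i) (hin : i ≤ n)
    (hj : 1 ≤ j) (hjn : j ≤ n) (hji : j ≠ i) (hji' : j ≠ i + 1) : Commute (t i) (Yel t n j) := by
  rw [Yel_eq_Pel_mul_Sel]
  obtain h | h : j < i ∨ i + 2 ≤ j := by omega
  · exact (H.commute_Pel_of_lt hj h hin).mul_right (H.commute_Sel_of_lt hj h hin)
  · exact (H.commute_Pel_of_add_two_le hi h hjn).mul_right (H.commute_Sel_of_add_two_le hi h hjn)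

lemma commute_Yel_one_Yel_two (H : AffineCBraidRelations t n) (hn : 2 ≤ n) :
    Commute (Yel t n 1) (Yel t n 2) := by
  have hP : Commute (t 1 * Pel t n 2 * t 1) (Pel t n 2) := by
    rw [mul_Pel_succ_mul t hn]
    exact H.commute_Pel_Pel_of_lt le_rfl one_lt_two hn
  rw [Yel_one, Yel_eq_Pel_mul_Sel, Sel_succ t le_rfl, Sel_one, ← mul_Pel_succ_mul t hn]
  exact commute_sandwich_mul_conj (H.commute_zero_Pel le_rfl hn) H.quartic_zero hP

lemma commute_Yel_one_Yel (H : AffineCBraidRelations t n) {j : ℕ} (hj : 2 ≤ j) (hjn : j ≤ n) :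
    Commute (Yel t n 1) (Yel t n j) := by
  induction j, hj using Nat.le_induction with
  | base => exact H.commute_Yel_one_Yel_two hjn
  | succ j hj ih =>
    have hT : Commute (Yel t n 1) (t j)⁻¹ :=
      (H.commute_Yel (by omega) (by omega) le_rfl (by omega) (by omega) (by omega)).symm.inv_right
    rw [Yel_succ t (by omega) hjn]
    exact (hT.mul_right (ih (by omega))).mul_right hT

lemma commute_Yel_Yel_of_lt (H : AffineCBraidRelations t n) {i j : ℕ} (hi : 1 ≤ i) (hij : i < j)
    (hjn : j ≤ n) : Commute (Yel t n i) (Yel t n j) := by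
  induction i, hi using Nat.le_induction with
  | base => exact H.commute_Yel_one_Yel hij hjn
  | succ i hi ih =>
    have hT : Commute (t i)⁻¹ (Yel t n j) :=
      (H.commute_Yel hi (by omega) (by omega) hjn (by omega) (by omega)).inv_left
    rw [Yel_succ t hi (by omega)]
    exact (hT.mul_left (ih (by omega))).mul_left hT

lemma commute_Yel_Yel (H : AffineCBraidRelations t n) {i j : ℕ} (hi : 1 ≤ i) (hin : i ≤ n)
    (hj : 1 ≤ j) (hjn : j ≤ n) : Commute (Yel t n i) (Yel t n j) := by
  obtain h | rfl | h := lt_trichotomy i j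
  · exact H.commute_Yel_Yel_of_lt hi h hjn
  · exact Commute.refl _
  · exact (H.commute_Yel_Yel_of_lt hj h hin).symm

end AffineCBraidRelations

section Opposite

variable {G : Type*}

/-- The family `K_0, T_1, T_2, …` in the opposite group, which exchanges the roles of the `X_i` and
the `Y_i`. -/
def opT (t : ℕ → G) (K0 : G) : ℕ → Gᵐᵒᵖ := Function.update (fun i => op (t i)) 0 (op K0)

variable (t : ℕ → G) (K0 : G)

lemma opT_zero : opT t K0 0 = op K0 := Function.update_self ..

lemma opT_of_pos {i : ℕ} (hi : 1 ≤ i) : opT t K0 i = op (t i) :=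
  Function.update_of_ne (by omega) ..

lemma Pel_opT [Monoid G] {n i : ℕ} (hi : 1 ≤ i) (hin : i ≤ n) :
    Pel (opT t K0) n i = op (Pel t n i) := by
  induction hin using Nat.decreasingInduction with
  | self => rw [Pel_self, Pel_self, opT_of_pos t K0 hi]
  | of_succ k hk ih =>
    rw [← mul_Pel_succ_mul _ hk, ← mul_Pel_succ_mul _ hk, ih (by omega), opT_of_pos t K0 hi,
      op_mul, op_mul, mul_assoc]

lemma Yel_opT [Group G] {n i : ℕ} (hi : 1 ≤ i) (hin : i ≤ n) :
    Yel (opT t K0) n i = op (Xel t K0 n i)⁻¹ := by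
  induction i, hi using Nat.le_induction with
  | base => rw [Yel_one, Pel_opT t K0 le_rfl hin, opT_zero, Xel_one, ← op_mul]; group
  | succ i hi ih =>
    rw [Yel_succ _ hi hin, ih (by omega), opT_of_pos t K0 hi, ← mul_Xel_mul t K0 hi hin, ← op_inv,
      ← op_mul, ← op_mul]
    group

end Opposite

/-- The elements `t 0, …, t n` and `K0` satisfy the relations of the double affine braid group of
type `C∨C_n`. -/
structure DoubleAffineBraidRelations {G : Type*} [Group G] (t : ℕ → G) (K0 : G) (n : ℕ) : Prop
    extends AffineCBraidRelations t n where
  commute_K0 {i : ℕ} : 2 ≤ i → i ≤ n → Commute K0 (t i)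
  quartic_K0 : t 1 * K0 * t 1 * K0 = K0 * t 1 * K0 * t 1
  commute_zero_conj_K0 : Commute (t 0) ((t 1)⁻¹ * K0 * t 1)

namespace DoubleAffineBraidRelations

variable {G : Type*} [Group G] {t : ℕ → G} {K0 : G} {n : ℕ}

lemma affineC_opT (H : DoubleAffineBraidRelations t K0 n) :
    AffineCBraidRelations (opT t K0) n where
  commute {i j} hi hij hj := by
    rw [opT_of_pos t K0 hi, opT_of_pos t K0 (by omega), commute_op]
    exact H.commute hi hij hj
  braid {i} hi hin := by
    rw [opT_of_pos t K0 hi, opT_of_pos t K0 (by omega)]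
    simpa only [← op_mul, op_inj, mul_assoc] using H.braid hi hin
  quartic_last {i} hi hin := by
    rw [opT_of_pos t K0 hi, opT_of_pos t K0 (by omega)]
    simpa only [← op_mul, op_inj, mul_assoc] using (H.quartic_last hi hin).symm
  commute_zero {j} hj hjn := by
    rw [opT_zero, opT_of_pos t K0 (by omega), commute_op]
    exact H.commute_K0 hj hjn
  quartic_zero := by
    rw [opT_zero, opT_of_pos t K0 le_rfl]
    simpa only [← op_mul, op_inj, mul_assoc] using H.quartic_K0

lemma commute_Xel (H : DoubleAffineBraidRelations t K0 n) {i j : ℕ} (hi : 1 ≤ i) (hin : i ≤ n)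
    (hj : 1 ≤ j) (hjn : j ≤ n) (hji : j ≠ i) (hji' : j ≠ i + 1) :
    Commute (t i) (Xel t K0 n j) := by
  have hc := H.affineC_opT.commute_Yel hi hin hj hjn hji hji'
  rwa [opT_of_pos t K0 hi, Yel_opT t K0 hj hjn, commute_op, Commute.inv_right_iff] at hc

lemma commute_Xel_Xel (H : DoubleAffineBraidRelations t K0 n) {i j : ℕ} (hi : 1 ≤ i) (hin : i ≤ n)
    (hj : 1 ≤ j) (hjn : j ≤ n) : Commute (Xel t K0 n i) (Xel t K0 n j) := by
  have hc := H.affineC_opT.commute_Yel_Yel hi hin hj hjn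
  rwa [Yel_opT t K0 hi hin, Yel_opT t K0 hj hjn, commute_op, Commute.inv_inv_iff] at hc

lemma commute_zero_conj_Tseg_K0 (H : DoubleAffineBraidRelations t K0 n) {i : ℕ} (hi : 2 ≤ i)
    (hin : i ≤ n) : Commute (t 0) ((Tseg t 1 i)⁻¹ * K0 * Tseg t 1 i) := by
  have hT : Commute (t 0) (Tseg t 2 i) :=
    commute_Tseg fun k _ _ => H.commute_zero (by omega) (by omega)
  have hK : (Tseg t 1 i)⁻¹ * K0 * Tseg t 1 i
      = (Tseg t 2 i)⁻¹ * ((t 1)⁻¹ * K0 * t 1) * Tseg t 2 i := by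
    rw [← mul_Tseg_succ_left t hi]
    group
  rw [hK]
  exact (hT.inv_right.mul_right H.commute_zero_conj_K0).mul_right hT

lemma commute_zero_Xel (H : DoubleAffineBraidRelations t K0 n) {i : ℕ} (hi : 2 ≤ i)
    (hin : i ≤ n) : Commute (t 0) (Xel t K0 n i) := by
  have hX : Xel t K0 n i = (Pel t n i)⁻¹ * ((Tseg t 1 i)⁻¹ * K0 * Tseg t 1 i)⁻¹ := by
    rw [Xel]
    group
  rw [hX]
  exact (H.commute_zero_Pel hi hin).inv_right.mul_right
    (H.commute_zero_conj_Tseg_K0 hi hin).inv_right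

lemma commute_Xel_inv_Pel_mul_Yel (H : DoubleAffineBraidRelations t K0 n) {i : ℕ} (hi : 2 ≤ i)
    (hin : i ≤ n) : Commute (Xel t K0 n i) ((Pel t n 1)⁻¹ * Yel t n 1) := by
  rw [Yel_one, inv_mul_cancel_left]
  exact (H.commute_zero_Xel hi hin).symm

end DoubleAffineBraidRelations

/-- In the double affine braid group `B̃ₙ` of type `C∨Cₙ` — i.e. for any group
`G` and elements `T_0, …, T_n, K_0` satisfying its defining relations — the elements
`Y_i := P_i T_{(i⋯1)} T_0 T_{(i⋯1)}⁻¹` and `X_i := P_i⁻¹ T_{(1⋯i)}⁻¹ K_0⁻¹ T_{(1⋯i)}` satisfy: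
the `Y_i` pairwise commute, the `X_i` pairwise commute, `T_iY_{i+1}T_i = Y_i`,
`T_iX_iT_i = X_{i+1}`, `T_iY_j = Y_jT_i` and `T_iX_j = X_jT_i` for `j ∉ {i, i+1}`,
`T_nY_{n−1} = Y_{n−1}T_n`, `T_nX_{n−1} = X_{n−1}T_n`, and `X_i` commutes with `P_1⁻¹Y_1`
for `2 ≤ i ≤ n−1`. -/
theorem XY_relations_in_DABG {G : Type*} [Group G] (n : ℕ) (hn : 2 ≤ n)
    (t : ℕ → G) (K0 : G)
    (hcomm : ∀ i j : ℕ, i + 2 ≤ j → j ≤ n → t i * t j = t j * t i)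
    (hbraid : ∀ i : ℕ, 1 ≤ i → i + 2 ≤ n →
      t i * t (i + 1) * t i = t (i + 1) * t i * t (i + 1))
    (h01 : t 0 * t 1 * t 0 * t 1 = t 1 * t 0 * t 1 * t 0)
    (hquartic : t (n - 1) * t n * t (n - 1) * t n = t n * t (n - 1) * t n * t (n - 1))
    (hK0comm : ∀ i : ℕ, 2 ≤ i → i ≤ n → K0 * t i = t i * K0)
    (hK0T1 : t 1 * K0 * t 1 * K0 = K0 * t 1 * K0 * t 1)
    (hT0K0 : t 0 * (t 1)⁻¹ * K0 * t 1 = (t 1)⁻¹ * K0 * t 1 * t 0) :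
    (∀ i j : ℕ, 1 ≤ i → i ≤ n → 1 ≤ j → j ≤ n →
        Yel t n i * Yel t n j = Yel t n j * Yel t n i) ∧
    (∀ i j : ℕ, 1 ≤ i → i ≤ n → 1 ≤ j → j ≤ n →
        Xel t K0 n i * Xel t K0 n j = Xel t K0 n j * Xel t K0 n i) ∧
    (∀ i : ℕ, 1 ≤ i → i + 1 ≤ n → t i * Yel t n (i + 1) * t i = Yel t n i) ∧
    (∀ i : ℕ, 1 ≤ i → i + 1 ≤ n → t i * Xel t K0 n i * t i = Xel t K0 n (i + 1)) ∧
    (∀ i j : ℕ, 1 ≤ i → i ≤ n - 1 → 1 ≤ j → j ≤ n → j ≠ i → j ≠ i + 1 →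
        t i * Yel t n j = Yel t n j * t i) ∧
    (∀ i j : ℕ, 1 ≤ i → i ≤ n - 1 → 1 ≤ j → j ≤ n → j ≠ i → j ≠ i + 1 →
        t i * Xel t K0 n j = Xel t K0 n j * t i) ∧
    (t n * Yel t n (n - 1) = Yel t n (n - 1) * t n) ∧
    (t n * Xel t K0 n (n - 1) = Xel t K0 n (n - 1) * t n) ∧
    (∀ i : ℕ, 2 ≤ i → i ≤ n - 1 →
        Xel t K0 n i * ((Pel t n 1)⁻¹ * Yel t n 1)
          = ((Pel t n 1)⁻¹ * Yel t n 1) * Xel t K0 n i) := by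
  have H : DoubleAffineBraidRelations t K0 n :=
    { commute := fun _ => hcomm _ _
      braid := hbraid _
      quartic_last := by rintro i - rfl; exact hquartic
      commute_zero := hcomm 0 _
      quartic_zero := h01
      commute_K0 := hK0comm _
      quartic_K0 := hK0T1
      commute_zero_conj_K0 := by simpa only [Commute, SemiconjBy, mul_assoc] using hT0K0 }
  refine ⟨fun i j hi hin hj hjn => H.commute_Yel_Yel hi hin hj hjn,
    fun i j hi hin hj hjn => H.commute_Xel_Xel hi hin hj hjn,
    fun i => mul_Yel_succ_mul t, fun i => mul_Xel_mul t K0,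
    fun i j hi hin hj hjn => H.commute_Yel hi (by omega) hj hjn,
    fun i j hi hin hj hjn => H.commute_Xel hi (by omega) hj hjn,
    H.commute_Yel ?_ ?_ ?_ ?_ ?_ ?_, H.commute_Xel ?_ ?_ ?_ ?_ ?_ ?_,
    fun i hi hin => H.commute_Xel_inv_Pel_mul_Yel hi (by omega)⟩ <;> omega
end
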